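/- arXiv:2303.16455 — 3 statements merged into one kernel-verified Lean document; each statement's English description precedes it below -/
import Mathlib

section
/- Fix a, b ∈ ℝ and ρ₀ ∈ (−1,1). The function ρ ↦ p₁₂(a,b,ρ) is differentiable at ρ₀ and its derivative there equals f(a,b|ρ₀) (Price's theorem for the bivariate Gaussian orthant probability). -/
open MeasureTheory

/-- The Gaussian tail function `Q(a) = ∫_a^∞ φ(t) dt`, where `φ` is the standard
normal density. -/
noncomputable def Qtail (a : ℝ) : ℝ :=
  ∫ t in Set.Ioi a, (1 / Real.sqrt (2 * Real.pi)) * Real.exp (-t ^ 2 / 2)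

/-- The standardized bivariate Gaussian density `f(y₁,y₂|ρ)` with correlation
coefficient `ρ`. -/
noncomputable def biGauss (y₁ y₂ ρ : ℝ) : ℝ :=
  (1 / (2 * Real.pi * Real.sqrt (1 - ρ ^ 2))) *
    Real.exp (-(y₁ ^ 2 - 2 * ρ * y₁ * y₂ + y₂ ^ 2) / (2 * (1 - ρ ^ 2)))

/-- The orthant probability `p₁₂(a,b,ρ) = ∫_a^∞ ∫_b^∞ f(y₁,y₂|ρ) dy₂ dy₁`. -/
noncomputable def orthantProb (a b ρ : ℝ) : ℝ :=
  ∫ y₁ in Set.Ioi a, ∫ y₂ in Set.Ioi b, biGauss y₁ y₂ ρ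

/-- The function `g(κ₁,κ₂,ϱ)` from the paper. -/
noncomputable def gFun (κ₁ κ₂ ϱ : ℝ) : ℝ :=
  (κ₁ / Real.sqrt (2 * Real.pi)) * Real.exp (-κ₁ ^ 2 / 2) *
      Qtail ((κ₂ - ϱ * κ₁) / Real.sqrt (1 - ϱ ^ 2))
    - ϱ * biGauss κ₁ κ₂ ϱ

noncomputable def EE (x : ℝ) : ℝ := Real.exp (-x ^ 2 / 2)

noncomputable def GG (x : ℝ) : ℝ := ∫ t in Set.Ioi x, EE t

lemma EE_cont : Continuous EE := by unfold EE; fun_prop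

lemma EE_pos (x : ℝ) : 0 < EE x := Real.exp_pos _

lemma EE_le (x : ℝ) : EE x ≤ 1 := by
  unfold EE
  rw [Real.exp_le_one_iff]
  nlinarith [sq_nonneg x]

lemma EE_int : Integrable EE := by
  have h := integrable_exp_neg_mul_sq (b := 1 / 2) (by norm_num)
  refine h.congr (Filter.Eventually.of_forall fun x => ?_)
  simp only [EE]
  congr 1
  ring

lemma xEE_int : Integrable (fun x => x * EE x) := by
  have h := integrable_mul_exp_neg_mul_sq (b := 1 / 2) (by norm_num)
  refine h.congr (Filter.Eventually.of_forall fun x => ?_)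
  simp only [EE]
  congr 2
  ring

lemma EE_deriv (x : ℝ) : HasDerivAt EE (-x * EE x) x := by
  unfold EE
  have h : HasDerivAt (fun x : ℝ => -x ^ 2 / 2) (-x) x := by
    have := ((hasDerivAt_pow 2 x).neg).div_const 2
    refine this.congr_deriv ?_
    norm_num
    ring
  refine h.exp.congr_deriv ?_
  ring

lemma GG_eq (x : ℝ) : GG x = (∫ t in Set.Ioi 0, EE t) - ∫ t in (0:ℝ)..x, EE t := by
  have := intervalIntegral.integral_Ioi_sub_Ioi' (f := EE) (μ := volume) (a := 0) (b := x)
    EE_int.integrableOn EE_int.integrableOn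
  unfold GG
  linarith

lemma GG_deriv (x : ℝ) : HasDerivAt GG (-EE x) x := by
  have h : GG = fun x => (∫ t in Set.Ioi 0, EE t) - ∫ t in (0:ℝ)..x, EE t := funext GG_eq
  rw [h]
  exact (EE_cont.integral_hasStrictDerivAt 0 x).hasDerivAt.const_sub _

lemma GG_cont : Continuous GG :=
  continuous_iff_continuousAt.2 fun x => (GG_deriv x).continuousAt

lemma GG_bound (x : ℝ) : ‖GG x‖ ≤ ∫ t, EE t := by
  have h0 : 0 ≤ GG x := setIntegral_nonneg measurableSet_Ioi fun t _ => (EE_pos t).le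
  rw [Real.norm_of_nonneg h0]
  exact setIntegral_le_integral EE_int (Filter.Eventually.of_forall fun t => (EE_pos t).le)

lemma biGauss_eq {ρ : ℝ} (h : 0 < 1 - ρ ^ 2) (x y : ℝ) :
    biGauss x y ρ = 1 / (2 * Real.pi * Real.sqrt (1 - ρ ^ 2)) *
      (EE x * EE ((y - ρ * x) / Real.sqrt (1 - ρ ^ 2))) := by
  unfold biGauss EE
  rw [← Real.exp_add, div_pow, Real.sq_sqrt h.le]
  congr 2
  field_simp
  ring

lemma subst_lem {s : ℝ} (hs : 0 < s) (b c : ℝ) :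
    ∫ y in Set.Ioi b, EE ((y - c) / s) = s * GG ((b - c) / s) := by
  have h1 := integral_comp_mul_left_Ioi (fun y => EE (y - c / s)) b (inv_pos.2 hs)
  have h2 : ∫ y in Set.Ioi (s⁻¹ * b), EE (y - c / s) = GG (s⁻¹ * b - c / s) := by
    unfold GG
    have := (measurePreserving_sub_right (volume : Measure ℝ) (c / s)).setIntegral_preimage_emb
      (MeasurableEquiv.subRight (c / s)).measurableEmbedding EE (Set.Ioi (s⁻¹ * b - c / s))
    rw [← this]
    simp
  rw [h2] at h1
  simp only [inv_inv, smul_eq_mul] at h1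
  have e : ∀ y, s⁻¹ * y - c / s = (y - c) / s := fun y => by field_simp
  simpa only [e] using h1

lemma inner_eq {ρ : ℝ} (h : 0 < 1 - ρ ^ 2) (b x : ℝ) :
    ∫ y in Set.Ioi b, biGauss x y ρ =
      1 / (2 * Real.pi) * (EE x * GG ((b - ρ * x) / Real.sqrt (1 - ρ ^ 2))) := by
  have hs := Real.sqrt_pos.2 h
  simp_rw [biGauss_eq h]
  rw [integral_const_mul, integral_const_mul, subst_lem hs]
  field_simp

lemma sqrt_deriv {ρ : ℝ} (h : 0 < 1 - ρ ^ 2) :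
    HasDerivAt (fun ρ : ℝ => Real.sqrt (1 - ρ ^ 2)) (-ρ / Real.sqrt (1 - ρ ^ 2)) ρ := by
  have h1 : HasDerivAt (fun ρ : ℝ => 1 - ρ ^ 2) (-(2 * ρ)) ρ := by
    simpa using (hasDerivAt_pow 2 ρ).const_sub 1
  have hs := Real.sqrt_pos.2 h
  refine (h1.sqrt h.ne').congr_deriv ?_
  field_simp

lemma arg_deriv {ρ : ℝ} (h : 0 < 1 - ρ ^ 2) (b x : ℝ) :
    HasDerivAt (fun ρ : ℝ => (b - ρ * x) / Real.sqrt (1 - ρ ^ 2))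
      (-(x - ρ * b) / (Real.sqrt (1 - ρ ^ 2)) ^ 3) ρ := by
  have hs := Real.sqrt_pos.2 h
  have h1 : HasDerivAt (fun ρ : ℝ => b - ρ * x) (-x) ρ := by
    simpa using ((hasDerivAt_id ρ).mul_const x).const_sub b
  refine (h1.div (sqrt_deriv h) hs.ne').congr_deriv ?_
  have hq := Real.sq_sqrt h.le
  field_simp
  rw [hq]
  ring

/-- the derivative in `ρ` of the inner integral -/
noncomputable def DD (b ρ x : ℝ) : ℝ :=
  1 / (2 * Real.pi) * (EE x * (EE ((b - ρ * x) / Real.sqrt (1 - ρ ^ 2)) *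
    ((x - ρ * b) / (Real.sqrt (1 - ρ ^ 2)) ^ 3)))

lemma inner_deriv {ρ : ℝ} (h : 0 < 1 - ρ ^ 2) (b x : ℝ) :
    HasDerivAt (fun ρ : ℝ =>
      1 / (2 * Real.pi) * (EE x * GG ((b - ρ * x) / Real.sqrt (1 - ρ ^ 2)))) (DD b ρ x) ρ := by
  have := (((GG_deriv _).comp ρ (arg_deriv h b x)).const_mul (EE x)).const_mul (1 / (2 * Real.pi))
  refine this.congr_deriv ?_
  unfold DD
  ring

lemma biGauss_deriv {ρ : ℝ} (h : 0 < 1 - ρ ^ 2) (b x : ℝ) :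
    HasDerivAt (fun x => - biGauss x b ρ) (DD b ρ x) x := by
  have hs := Real.sqrt_pos.2 h
  have hq := Real.sq_sqrt h.le
  simp_rw [biGauss_eq h]
  have h1 : HasDerivAt (fun x : ℝ => (b - ρ * x) / Real.sqrt (1 - ρ ^ 2))
      (-ρ / Real.sqrt (1 - ρ ^ 2)) x := by
    simpa using (((hasDerivAt_id x).const_mul ρ).const_sub b).div_const (Real.sqrt (1 - ρ ^ 2))
  have := (((EE_deriv x).mul ((EE_deriv _).comp x h1)).const_mul
    (1 / (2 * Real.pi * Real.sqrt (1 - ρ ^ 2)))).neg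
  refine this.congr_deriv ?_
  unfold DD
  simp only [Function.comp]
  generalize EE ((b - ρ * x) / Real.sqrt (1 - ρ ^ 2)) = e
  field_simp
  rw [hq]
  ring

lemma DD_cont (b ρ : ℝ) : Continuous (DD b ρ) := by
  have := EE_cont
  unfold DD
  fun_prop

lemma DD_bound {ρ m : ℝ} (hm : 0 < m) (h : m ≤ 1 - ρ ^ 2) (b x : ℝ) :
    ‖DD b ρ x‖ ≤ 1 / (2 * Real.pi) * (1 / Real.sqrt m ^ 3) * (‖x * EE x‖ + |b| * EE x) := by
  have hs := Real.sqrt_pos.2 hm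
  have hle := Real.sqrt_le_sqrt h
  have hρ : |ρ| ≤ 1 := by
    rw [← sq_le_one_iff_abs_le_one]; linarith
  have hx : |x - ρ * b| ≤ |x| + |b| := by
    calc |x - ρ * b| ≤ |x| + |ρ * b| := abs_sub _ _
      _ ≤ |x| + |b| := by
        rw [abs_mul]
        nlinarith [abs_nonneg b]
  have hE := EE_pos x
  unfold DD
  rw [norm_mul, norm_mul, norm_mul, norm_div (x - ρ * b), norm_pow, norm_mul x,
    Real.norm_of_nonneg hE.le,
    Real.norm_of_nonneg (EE_pos _).le, Real.norm_of_nonneg (Real.sqrt_nonneg _),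
    Real.norm_of_nonneg (by positivity : 0 ≤ 1 / (2 * Real.pi)), Real.norm_eq_abs,
    Real.norm_eq_abs]
  have h3 : |x - ρ * b| / Real.sqrt (1 - ρ ^ 2) ^ 3 ≤ (|x| + |b|) / Real.sqrt m ^ 3 := by
    gcongr
  calc _ ≤ 1 / (2 * Real.pi) * (EE x * (1 * ((|x| + |b|) / Real.sqrt m ^ 3))) := by
        gcongr
        exact EE_le _
    _ = _ := by ring

lemma bound_int (C b : ℝ) : Integrable (fun x => C * (‖x * EE x‖ + |b| * EE x)) :=
  (xEE_int.norm.add (EE_int.const_mul _)).const_mul _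

lemma DD_int {ρ : ℝ} (h : 0 < 1 - ρ ^ 2) (b : ℝ) : Integrable (DD b ρ) :=
  (bound_int _ b).mono' (DD_cont b ρ).aestronglyMeasurable
    (Filter.Eventually.of_forall fun x => DD_bound h le_rfl b x)

lemma EE_tendsto : Filter.Tendsto EE Filter.atTop (nhds 0) := by
  unfold EE
  refine Real.tendsto_exp_atBot.comp ?_
  have h : Filter.Tendsto (fun x : ℝ => x ^ 2 / 2) Filter.atTop Filter.atTop :=
    (Filter.tendsto_pow_atTop two_ne_zero).atTop_div_const (by norm_num)
  refine (Filter.tendsto_neg_atTop_atBot.comp h).congr fun x => ?_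
  simp only [Function.comp]
  ring

lemma biGauss_tendsto {ρ : ℝ} (h : 0 < 1 - ρ ^ 2) (b : ℝ) :
    Filter.Tendsto (fun x => - biGauss x b ρ) Filter.atTop (nhds 0) := by
  have h1 : Filter.Tendsto (fun x => EE x * EE ((b - ρ * x) / Real.sqrt (1 - ρ ^ 2)))
      Filter.atTop (nhds 0) :=
    squeeze_zero (fun x => (mul_pos (EE_pos _) (EE_pos _)).le)
      (fun x => mul_le_of_le_one_right (EE_pos _).le (EE_le _)) EE_tendsto
  simp_rw [biGauss_eq h]
  simpa using (h1.const_mul (1 / (2 * Real.pi * Real.sqrt (1 - ρ ^ 2)))).neg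

lemma DD_integral {ρ : ℝ} (h : 0 < 1 - ρ ^ 2) (a b : ℝ) :
    ∫ x in Set.Ioi a, DD b ρ x = biGauss a b ρ := by
  have := integral_Ioi_of_hasDerivAt_of_tendsto' (a := a) (fun x _ => biGauss_deriv h b x)
    (DD_int h b).integrableOn (biGauss_tendsto h b)
  rw [this]
  ring

/-- Price's theorem: Fix `a, b ∈ ℝ` and `ρ₀ ∈ (−1,1)`. The function
`ρ ↦ p₁₂(a,b,ρ)` is differentiable at `ρ₀` and its derivative there equals
`f(a,b|ρ₀)`. -/
theorem price_theorem (a b ρ₀ : ℝ) (hρ₀ : ρ₀ ∈ Set.Ioo (-1 : ℝ) 1) :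
    HasDerivAt (fun ρ => orthantProb a b ρ) (biGauss a b ρ₀) ρ₀ := by
  have h0 : 0 < 1 - ρ₀ ^ 2 := by nlinarith [hρ₀.1, hρ₀.2]
  obtain ⟨m, hm, hm0⟩ := exists_between h0
  have hU : {ρ : ℝ | m < 1 - ρ ^ 2} ∈ nhds ρ₀ :=
    (isOpen_lt continuous_const (by fun_prop)).mem_nhds hm0
  have hGc : ∀ ρ : ℝ, Continuous (fun x =>
      1 / (2 * Real.pi) * (EE x * GG ((b - ρ * x) / Real.sqrt (1 - ρ ^ 2)))) := by
    intro ρ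
    have := EE_cont
    have := GG_cont
    fun_prop
  have key := (hasDerivAt_integral_of_dominated_loc_of_deriv_le
    (μ := volume.restrict (Set.Ioi a)) (x₀ := ρ₀)
    (F := fun ρ x => 1 / (2 * Real.pi) * (EE x * GG ((b - ρ * x) / Real.sqrt (1 - ρ ^ 2))))
    (F' := fun ρ x => DD b ρ x)
    (bound := fun x => 1 / (2 * Real.pi) * (1 / Real.sqrt m ^ 3) * (‖x * EE x‖ + |b| * EE x))
    hU
    (Filter.Eventually.of_forall fun ρ => (hGc ρ).aestronglyMeasurable)
    (by
      refine Integrable.integrableOn ?_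
      refine (EE_int.const_mul (1 / (2 * Real.pi) * ∫ t, EE t)).mono'
        (hGc ρ₀).aestronglyMeasurable (Filter.Eventually.of_forall fun x => ?_)
      rw [norm_mul, norm_mul, Real.norm_of_nonneg (EE_pos _).le,
        Real.norm_of_nonneg (by positivity : 0 ≤ 1 / (2 * Real.pi))]
      calc _ ≤ 1 / (2 * Real.pi) * (EE x * ∫ t, EE t) := by
            have := (EE_pos x).le
            gcongr
            exact GG_bound _
        _ = _ := by ring)
    (DD_cont b ρ₀).aestronglyMeasurable
    (Filter.Eventually.of_forall fun x ρ hρ => DD_bound hm (le_of_lt hρ) b x)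
    (bound_int _ b).integrableOn
    (Filter.Eventually.of_forall fun x ρ hρ => inner_deriv (hm.trans hρ) b x)).2
  rw [DD_integral h0] at key
  refine key.congr_of_eventuallyEq ?_
  filter_upwards [hU] with ρ hρ
  unfold orthantProb
  simp_rw [inner_eq (hm.trans hρ)]
end

section
/- Let v ∈ ℝ, σ₁ > 0, σ₂ > 0 and σ₁₂ ∈ ℝ with |σ₁₂| < σ₁·σ₂, and set ρ = σ₁₂/(σ₁·σ₂). The function s ↦ p₁₂(v/s, v/σ₂, σ₁₂/(s·σ₂)) (the orthant probability as a function of the first standard deviation, with the covariance σ₁₂ held fixed) is differentiable at s = σ₁ and its derivative there equals (1/σ₁)·g(v/σ₁, v/σ₂, ρ). -/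
open MeasureTheory

noncomputable def nphi (t : ℝ) : ℝ := (1 / Real.sqrt (2 * Real.pi)) * Real.exp (-t ^ 2 / 2)

lemma nphi_nonneg (t : ℝ) : 0 ≤ nphi t := by unfold nphi; positivity

lemma nphi_pos (t : ℝ) : 0 < nphi t := by unfold nphi; positivity

lemma nphi_cont : Continuous nphi := by unfold nphi; fun_prop

lemma nphi_le (t : ℝ) : nphi t ≤ 1 := by
  unfold nphi
  have h1 : 1 ≤ Real.sqrt (2 * Real.pi) := by
    rw [Real.one_le_sqrt]; nlinarith [Real.pi_gt_three]
  have h2 : Real.exp (-t ^ 2 / 2) ≤ 1 := by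
    rw [Real.exp_le_one_iff]; nlinarith [sq_nonneg t]
  have h3 : 1 / Real.sqrt (2 * Real.pi) ≤ 1 := by
    rw [div_le_one (by linarith)]; exact h1
  calc _ ≤ (1:ℝ) * 1 := by gcongr
    _ = 1 := by norm_num

lemma nphi_int : Integrable nphi := by
  have := (integrable_exp_neg_mul_sq (b := 1/2) (by norm_num)).const_mul (1 / Real.sqrt (2 * Real.pi))
  refine this.congr (Filter.Eventually.of_forall fun t => ?_)
  simp only [nphi]; congr 2; ring

lemma mul_nphi_int : Integrable (fun t => t * nphi t) := by
  have := (integrable_mul_exp_neg_mul_sq (b := 1/2) (by norm_num)).const_mul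
    (1 / Real.sqrt (2 * Real.pi))
  refine this.congr (Filter.Eventually.of_forall fun t => ?_)
  simp only [nphi]
  rw [show -(1/2 : ℝ) * t ^ 2 = -t ^ 2 / 2 by ring]; ring

lemma nphi_deriv (t : ℝ) : HasDerivAt nphi (-t * nphi t) t := by
  have h : HasDerivAt (fun t : ℝ => -t ^ 2 / 2) (-t) t := by
    have := ((hasDerivAt_id t).pow 2).neg.div_const 2
    convert! this using 1
    simp
    ring
  have := h.exp.const_mul (1 / Real.sqrt (2 * Real.pi))
  unfold nphi
  convert! this using 1
  ring

lemma nphi_tendsto : Filter.Tendsto nphi Filter.atTop (nhds 0) := by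
  have h : Filter.Tendsto (fun t : ℝ => t ^ 2 / 2) Filter.atTop Filter.atTop :=
    (Filter.tendsto_pow_atTop (by norm_num)).atTop_div_const (by norm_num)
  have := (Real.tendsto_exp_neg_atTop_nhds_zero.comp h).const_mul (1 / Real.sqrt (2 * Real.pi))
  simp only [mul_zero] at this
  refine this.congr fun t => ?_
  simp only [nphi, Function.comp]
  congr 2; ring

lemma Qtail_eq (a : ℝ) : Qtail a = ∫ t in Set.Ioi a, nphi t := rfl

lemma Qtail_eq' (a : ℝ) : Qtail a = Qtail 0 - ∫ t in (0:ℝ)..a, nphi t := by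
  have := intervalIntegral.integral_interval_add_Ioi (a := 0) (b := a)
    nphi_int.integrableOn nphi_int.integrableOn
  rw [Qtail_eq, Qtail_eq, ← this]; ring

lemma Qtail_deriv (a : ℝ) : HasDerivAt Qtail (-nphi a) a := by
  have h : HasDerivAt (fun a => ∫ t in (0:ℝ)..a, nphi t) (nphi a) a :=
    intervalIntegral.integral_hasDerivAt_right nphi_int.intervalIntegrable
      (nphi_cont.stronglyMeasurableAtFilter _ _) nphi_cont.continuousAt
  have := h.const_sub (Qtail 0)
  rwa [show (fun x => Qtail 0 - ∫ t in (0:ℝ)..x, nphi t) = Qtail from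
    (funext Qtail_eq').symm] at this

lemma Qtail_cont : Continuous Qtail :=
  continuous_iff_continuousAt.2 fun a => (Qtail_deriv a).continuousAt

lemma Qtail_tendsto : Filter.Tendsto Qtail Filter.atTop (nhds 0) := by
  have h := (intervalIntegral_tendsto_integral_Ioi (0:ℝ) (nphi_int.integrableOn)
    Filter.tendsto_id).const_sub (Qtail 0)
  rw [← Qtail_eq, sub_self] at h
  refine h.congr fun t => ?_
  rw [Qtail_eq' t]; rfl

lemma Qtail_abs (a : ℝ) : |Qtail a| ≤ ∫ t, nphi t := by
  rw [Qtail_eq, abs_of_nonneg (setIntegral_nonneg measurableSet_Ioi fun t _ => nphi_nonneg t)]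
  exact setIntegral_le_integral nphi_int (Filter.Eventually.of_forall nphi_nonneg)

lemma nphi_mul (x y : ℝ) : nphi x * nphi y = 1 / (2 * Real.pi) * Real.exp (-(x^2 + y^2)/2) := by
  unfold nphi
  have : Real.sqrt (2 * Real.pi) * Real.sqrt (2 * Real.pi) = 2 * Real.pi :=
    Real.mul_self_sqrt (by positivity)
  rw [show -(x^2 + y^2)/2 = -x^2/2 + -y^2/2 by ring, Real.exp_add]
  have h2 : 1 / (2 * Real.pi) = 1 / Real.sqrt (2 * Real.pi) * (1 / Real.sqrt (2 * Real.pi)) := by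
    rw [one_div_mul_one_div, this]
  rw [h2]; ring

lemma biGauss_eq_s2 (y₁ y₂ ρ r : ℝ) (hr : 0 < r) (h : r ^ 2 = 1 - ρ ^ 2) :
    biGauss y₁ y₂ ρ = nphi y₂ * (nphi ((y₁ - ρ * y₂) / r) * (1 / r)) := by
  rw [← mul_assoc, nphi_mul]
  unfold biGauss
  rw [← h, Real.sqrt_sq hr.le]
  have : -(y₁ ^ 2 - 2 * ρ * y₁ * y₂ + y₂ ^ 2) / (2 * r ^ 2)
      = -(y₂ ^ 2 + ((y₁ - ρ * y₂) / r) ^ 2) / 2 := by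
    field_simp
    have : ρ ^ 2 = 1 - r ^ 2 := by linarith
    linear_combination y₂ ^ 2 * h
  rw [this]
  field_simp

lemma inner_int (a m r : ℝ) (hr : 0 < r) :
    ∫ y in Set.Ioi a, nphi ((y - m) / r) * (1 / r) = Qtail ((a - m) / r) := by
  have hd : ∀ y : ℝ, HasDerivAt (fun y => -Qtail ((y - m) / r)) (nphi ((y - m) / r) * (1 / r)) y := by
    intro y
    have h1 : HasDerivAt (fun y => (y - m) / r) (1 / r) y :=
      ((hasDerivAt_id y).sub_const m).div_const r
    have := ((Qtail_deriv ((y - m) / r)).comp y h1).neg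
    convert! this using 1
    ring
  have ht : Filter.Tendsto (fun y => -Qtail ((y - m) / r)) Filter.atTop (nhds 0) := by
    have h1 : Filter.Tendsto (fun y => (y - m) / r) Filter.atTop Filter.atTop :=
      (Filter.tendsto_atTop_add_const_right _ (-m) Filter.tendsto_id).atTop_div_const hr
    simpa using (Qtail_tendsto.comp h1).neg
  rw [integral_Ioi_of_hasDerivAt_of_nonneg' (fun y _ => hd y)
    (fun y _ => mul_nonneg (nphi_nonneg _) (by positivity)) ht]
  ring

lemma biGauss_integrable (ρ : ℝ) (h : |ρ| < 1) :
    Integrable (Function.uncurry fun y₁ y₂ => biGauss y₁ y₂ ρ) (volume.prod volume) := by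
  have hρ : 0 < 1 - ρ ^ 2 := by
    have := (sq_lt_one_iff_abs_lt_one ρ).2 h; linarith
  set k := (1 - |ρ|) / (2 * (1 - ρ ^ 2)) with hk
  have hk0 : 0 < k := by apply div_pos <;> linarith
  have hb := ((integrable_exp_neg_mul_sq hk0).mul_prod (integrable_exp_neg_mul_sq hk0)).const_mul
    (1 / (2 * Real.pi * Real.sqrt (1 - ρ ^ 2)))
  refine hb.mono' ?_ ?_
  · apply Continuous.aestronglyMeasurable
    unfold biGauss Function.uncurry
    fun_prop
  · refine Filter.Eventually.of_forall fun z => ?_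
    obtain ⟨x, y⟩ := z
    simp only [Function.uncurry, biGauss]
    rw [Real.norm_of_nonneg (by positivity), ← Real.exp_add]
    gcongr
    rw [show -k * x ^ 2 + -k * y ^ 2 = -((1 - |ρ|) * (x ^ 2 + y ^ 2)) / (2 * (1 - ρ ^ 2)) by
      rw [hk]; ring]
    gcongr
    rcases abs_cases ρ with ⟨h1, h2⟩ | ⟨h1, h2⟩
    · rw [h1]; nlinarith [mul_nonneg h2 (sq_nonneg (x - y))]
    · rw [h1]; nlinarith [mul_nonneg (neg_pos.2 h2).le (sq_nonneg (x + y))]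

lemma orthantProb_eq (a b ρ r : ℝ) (hr : 0 < r) (h : r ^ 2 = 1 - ρ ^ 2) :
    orthantProb a b ρ = ∫ y in Set.Ioi b, nphi y * Qtail ((a - ρ * y) / r) := by
  have hρ : |ρ| < 1 := (sq_lt_one_iff_abs_lt_one ρ).1 (by nlinarith [pow_pos hr 2])
  unfold orthantProb
  rw [integral_integral_swap]
  · congr 1
    ext y
    simp only [biGauss_eq_s2 _ _ ρ r hr h]
    rw [integral_const_mul, inner_int _ _ _ hr]
  · rw [Measure.prod_restrict]
    exact (biGauss_integrable ρ hρ).integrableOn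

lemma orthantProb_eq_s (v s b c : ℝ) (hs : 0 < s) (hc : |c| < s) :
    orthantProb (v / s) b (c / s) =
      ∫ y in Set.Ioi b, nphi y * Qtail ((v - c * y) / Real.sqrt (s ^ 2 - c ^ 2)) := by
  have hp : 0 < s ^ 2 - c ^ 2 := by
    have := sq_lt_sq.2 (hc.trans_le (le_abs_self s)); linarith
  have hR := Real.sqrt_pos.2 hp
  have hR2 := Real.sq_sqrt hp.le
  rw [orthantProb_eq _ _ _ (Real.sqrt (s ^ 2 - c ^ 2) / s) (by positivity)
    (by rw [div_pow, div_pow, hR2]; field_simp)]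
  congr 1
  ext y
  congr 2
  field_simp

lemma deriv_inner (v c y s : ℝ) (hc : |c| < s) :
    HasDerivAt (fun s => nphi y * Qtail ((v - c * y) / Real.sqrt (s ^ 2 - c ^ 2)))
      (nphi y * nphi ((v - c * y) / Real.sqrt (s ^ 2 - c ^ 2)) * (v - c * y) *
        (s / (Real.sqrt (s ^ 2 - c ^ 2)) ^ 3)) s := by
  have hp : 0 < s ^ 2 - c ^ 2 := by
    have := sq_lt_sq.2 (hc.trans_le (le_abs_self s)); linarith
  have hR := Real.sqrt_pos.2 hp
  have h1 : HasDerivAt (fun s : ℝ => s ^ 2 - c ^ 2) (2 * s) s := by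
    simpa using ((hasDerivAt_id s).pow 2).sub_const (c ^ 2)
  have h2 := (hasDerivAt_const s (v - c * y)).div (h1.sqrt hp.ne') hR.ne'
  have := ((Qtail_deriv _).comp s h2).const_mul (nphi y)
  convert! this using 1
  field_simp
  simp
  ring

lemma deriv_outer (v s b c : ℝ) (hc : |c| < s) :
    IntegrableOn (fun y => nphi y * nphi ((v - c * y) / Real.sqrt (s ^ 2 - c ^ 2)) * (v - c * y) *
        (s / (Real.sqrt (s ^ 2 - c ^ 2)) ^ 3)) (Set.Ioi b) ∧
    HasDerivAt (fun s => ∫ y in Set.Ioi b,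
        nphi y * Qtail ((v - c * y) / Real.sqrt (s ^ 2 - c ^ 2)))
      (∫ y in Set.Ioi b, nphi y * nphi ((v - c * y) / Real.sqrt (s ^ 2 - c ^ 2)) * (v - c * y) *
        (s / (Real.sqrt (s ^ 2 - c ^ 2)) ^ 3)) s := by
  obtain ⟨t, ht1, ht2⟩ := exists_between hc
  have ht0 : 0 < t := (abs_nonneg c).trans_lt ht1
  have hp : 0 < t ^ 2 - c ^ 2 := by
    have := sq_lt_sq.2 (ht1.trans_le (le_abs_self t)); linarith
  have hm := Real.sqrt_pos.2 hp
  set K := 2 * s / Real.sqrt (t ^ 2 - c ^ 2) ^ 3 with hK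
  have hQc := Qtail_cont
  have hnc := nphi_cont
  refine hasDerivAt_integral_of_dominated_loc_of_deriv_le
    (F := fun s y => nphi y * Qtail ((v - c * y) / Real.sqrt (s ^ 2 - c ^ 2)))
    (F' := fun s y => nphi y * nphi ((v - c * y) / Real.sqrt (s ^ 2 - c ^ 2)) * (v - c * y) *
        (s / (Real.sqrt (s ^ 2 - c ^ 2)) ^ 3))
    (s := Set.Ioo t (2 * s)) (bound := fun y => (|v| * nphi y + |c| * ‖y * nphi y‖) * K)
    (Ioo_mem_nhds ht2 (by linarith)) ?_ ?_ ?_ ?_ ?_ ?_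
  · refine Filter.Eventually.of_forall fun x => Continuous.aestronglyMeasurable ?_
    fun_prop
  · refine Integrable.mono' (g := fun y => nphi y * ∫ t, nphi t)
      (nphi_int.integrableOn.mul_const _) (Continuous.aestronglyMeasurable (by fun_prop)) ?_
    refine Filter.Eventually.of_forall fun y => ?_
    rw [norm_mul, Real.norm_of_nonneg (nphi_nonneg y)]
    exact mul_le_mul_of_nonneg_left (Qtail_abs _) (nphi_nonneg y)
  · exact Continuous.aestronglyMeasurable (by fun_prop)
  · refine Filter.Eventually.of_forall fun y x hx => ?_
    have hx0 : 0 < x := ht0.trans hx.1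
    have hle : Real.sqrt (t ^ 2 - c ^ 2) ≤ Real.sqrt (x ^ 2 - c ^ 2) := by
      apply Real.sqrt_le_sqrt
      have := pow_le_pow_left₀ ht0.le hx.1.le 2
      linarith
    have hR := hm.trans_le hle
    have hs0 : 0 < s := ht0.trans ht2
    rw [norm_mul, norm_mul, norm_mul, Real.norm_of_nonneg (nphi_nonneg _),
      Real.norm_of_nonneg (nphi_nonneg _), Real.norm_of_nonneg (r := x / _) (by positivity)]
    have e1 : x / Real.sqrt (x ^ 2 - c ^ 2) ^ 3 ≤ K := by
      rw [hK]
      gcongr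
      exact hx.2.le
    have e2 : ‖v - c * y‖ ≤ |v| + |c| * |y| := by
      rw [← abs_mul]; exact norm_sub_le _ _
    have e3 : nphi y * nphi ((v - c * y) / Real.sqrt (x ^ 2 - c ^ 2)) ≤ nphi y * 1 :=
      mul_le_mul_of_nonneg_left (nphi_le _) (nphi_nonneg y)
    have hy := nphi_nonneg y
    calc _ ≤ (nphi y * 1 * (|v| + |c| * |y|)) * K := by
          gcongr
      _ = _ := by
          rw [norm_mul, Real.norm_of_nonneg hy, Real.norm_eq_abs]; ring
  · exact ((nphi_int.integrableOn.const_mul _).add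
      (mul_nphi_int.norm.integrableOn.const_mul _)).mul_const _
  · exact Filter.Eventually.of_forall fun y x hx => deriv_inner v c y x (ht1.trans hx.1)

lemma nphi_complete (v s c y R : ℝ) (hs : 0 < s) (hR : 0 < R) (h : R ^ 2 = s ^ 2 - c ^ 2) :
    nphi y * nphi ((v - c * y) / R) = nphi (v / s) * nphi ((s * y - v * c / s) / R) := by
  rw [nphi_mul, nphi_mul]
  congr 3
  field_simp
  have : c ^ 2 = s ^ 2 - R ^ 2 := by linarith
  ring_nf
  linear_combination (-s ^ 2 * y ^ 2 + v ^ 2) * h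

lemma final_int (v s b c R : ℝ) (hs : 0 < s) (hR : 0 < R) (h : R ^ 2 = s ^ 2 - c ^ 2)
    (hInt : IntegrableOn (fun y => nphi y * nphi ((v - c * y) / R) * (v - c * y) *
        (s / R ^ 3)) (Set.Ioi b)) :
    ∫ y in Set.Ioi b, nphi y * nphi ((v - c * y) / R) * (v - c * y) * (s / R ^ 3)
      = v / s ^ 2 * nphi (v / s) * Qtail ((s * b - v * c / s) / R)
        - c / (s * R) * (nphi b * nphi ((v - c * b) / R)) := by
  have hd : ∀ y, HasDerivAt (fun y => -(v / s ^ 2 * nphi (v / s) * Qtail ((s * y - v * c / s) / R))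
        + c / (s * R) * (nphi y * nphi ((v - c * y) / R)))
      (nphi y * nphi ((v - c * y) / R) * (v - c * y) * (s / R ^ 3)) y := by
    intro y
    have h1 : HasDerivAt (fun y => (s * y - v * c / s) / R) (s / R) y := by
      simpa using (((hasDerivAt_id y).const_mul s).sub_const (v * c / s)).div_const R
    have h2 : HasDerivAt (fun y => (v - c * y) / R) (-c / R) y := by
      simpa using (((hasDerivAt_id y).const_mul c).const_sub v).div_const R
    have h3 := (((Qtail_deriv _).comp y h1).const_mul (v / s ^ 2 * nphi (v / s))).neg
    have h4 := ((nphi_deriv y).mul ((nphi_deriv _).comp y h2)).const_mul (c / (s * R))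
    have := h3.add h4
    convert! this using 1
    have e : v / s ^ 2 * nphi (v / s) * (-nphi ((s * y - v * c / s) / R) * (s / R))
        = -(v / (s * R)) * (nphi y * nphi ((v - c * y) / R)) := by
      rw [nphi_complete v s c y R hs hR h]; field_simp
    rw [e]
    simp only [Function.comp]
    generalize nphi ((v - c * y) / R) = A
    generalize nphi y = B
    field_simp
    ring_nf
    linear_combination (c * y - v) * A * B * h
  have ht : Filter.Tendsto (fun y => -(v / s ^ 2 * nphi (v / s) * Qtail ((s * y - v * c / s) / R))
        + c / (s * R) * (nphi y * nphi ((v - c * y) / R))) Filter.atTop (nhds 0) := by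
    have h1 : Filter.Tendsto (fun y => (s * y - v * c / s) / R) Filter.atTop Filter.atTop :=
      (Filter.tendsto_atTop_add_const_right _ (-(v * c / s))
        (Filter.tendsto_id.const_mul_atTop hs)).atTop_div_const hR
    have h2 := (((Qtail_tendsto.comp h1).const_mul (v / s ^ 2 * nphi (v / s))).neg).add
      ((((nphi_tendsto.comp h1).const_mul (nphi (v / s)))).const_mul (c / (s * R)))
    simp only [mul_zero, neg_zero, add_zero] at h2
    refine h2.congr fun y => ?_
    rw [nphi_complete v s c y R hs hR h]; rfl
  rw [integral_Ioi_of_hasDerivAt_of_tendsto' (fun y _ => hd y) hInt ht]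
  ring

/-- Let `v ∈ ℝ`, `σ₁ > 0`, `σ₂ > 0` and `σ₁₂ ∈ ℝ` with
`|σ₁₂| < σ₁·σ₂`, and set `ρ = σ₁₂/(σ₁·σ₂)`. The function
`s ↦ p₁₂(v/s, v/σ₂, σ₁₂/(s·σ₂))` is differentiable at `s = σ₁` and its derivative
there equals `(1/σ₁)·g(v/σ₁, v/σ₂, ρ)`. -/
theorem orthantProb_hasDerivAt_sigma1 (v σ₁ σ₂ σ₁₂ : ℝ) (hσ₁ : 0 < σ₁) (hσ₂ : 0 < σ₂)
    (hσ₁₂ : |σ₁₂| < σ₁ * σ₂) :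
    HasDerivAt (fun s => orthantProb (v / s) (v / σ₂) (σ₁₂ / (s * σ₂)))
      ((1 / σ₁) * gFun (v / σ₁) (v / σ₂) (σ₁₂ / (σ₁ * σ₂))) σ₁ := by
  set c := σ₁₂ / σ₂ with hcdef
  have hc : |c| < σ₁ := by
    rw [hcdef, abs_div, abs_of_pos hσ₂, div_lt_iff₀ hσ₂]; exact hσ₁₂
  have hcs : ∀ s, σ₁₂ / (s * σ₂) = c / s := fun s => by
    rw [hcdef, div_div, mul_comm]
  have hp : 0 < σ₁ ^ 2 - c ^ 2 := by
    have := sq_lt_sq.2 (hc.trans_le (le_abs_self σ₁)); linarith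
  have hR := Real.sqrt_pos.2 hp
  have hR2 := Real.sq_sqrt hp.le
  obtain ⟨hi, hd⟩ := deriv_outer v σ₁ (v / σ₂) c hc
  rw [final_int v σ₁ (v / σ₂) c _ hσ₁ hR hR2 hi] at hd
  have hev : (fun s => orthantProb (v / s) (v / σ₂) (σ₁₂ / (s * σ₂))) =ᶠ[nhds σ₁]
      (fun s => ∫ y in Set.Ioi (v / σ₂),
        nphi y * Qtail ((v - c * y) / Real.sqrt (s ^ 2 - c ^ 2))) := by
    filter_upwards [Ioi_mem_nhds hc] with s hs
    rw [hcs, orthantProb_eq_s v s _ c ((abs_nonneg c).trans_lt hs) hs]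
  refine (hd.congr_of_eventuallyEq hev).congr_deriv ?_
  set R := Real.sqrt (σ₁ ^ 2 - c ^ 2) with hRdef
  have hr2 : (R / σ₁) ^ 2 = 1 - (c / σ₁) ^ 2 := by
    rw [div_pow, div_pow, hR2]; field_simp
  have hr : Real.sqrt (1 - (c / σ₁) ^ 2) = R / σ₁ := by
    rw [← hr2, Real.sqrt_sq (by positivity)]
  rw [hcs]
  unfold gFun
  rw [biGauss_eq_s2 _ _ (c / σ₁) (R / σ₁) (by positivity) hr2, hr,
    show (v / σ₂ - c / σ₁ * (v / σ₁)) / (R / σ₁) = (σ₁ * (v / σ₂) - v * c / σ₁) / R by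
      field_simp,
    show (v / σ₁ - c / σ₁ * (v / σ₂)) / (R / σ₁) = (v - c * (v / σ₂)) / R by field_simp,
    show v / σ₁ / Real.sqrt (2 * Real.pi) * Real.exp (-(v / σ₁) ^ 2 / 2)
      = v / σ₁ * nphi (v / σ₁) by unfold nphi; ring]
  generalize nphi ((v - c * (v / σ₂)) / R) = A
  generalize nphi (v / σ₂) = B
  generalize nphi (v / σ₁) = C
  generalize Qtail ((σ₁ * (v / σ₂) - v * c / σ₁) / R) = D
  field_simp
end

section
/- For every ϱ ∈ (−1,1) and all κ₁, κ₂ ∈ ℝ, the sum over the four sign patterns vanishes: ∑_{ε₁ ∈ {−1,+1}} ∑_{ε₂ ∈ {−1,+1}} g(ε₁·κ₁, ε₂·κ₂, ε₁·ε₂·ϱ) = 0. (This is the regularity condition E[∂L/∂σ₁] = 0 for the one-bit likelihood.) -/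
open MeasureTheory

/-- For every `ϱ ∈ (−1,1)` and all `κ₁, κ₂ ∈ ℝ`, the sum of
`g(ε₁·κ₁, ε₂·κ₂, ε₁·ε₂·ϱ)` over the four sign patterns `ε₁, ε₂ ∈ {−1,+1}` vanishes.
(Regularity condition `E[∂L/∂σ₁] = 0` for the one-bit likelihood.) -/
theorem gFun_sign_sum_eq_zero (ϱ : ℝ) (hϱ : ϱ ∈ Set.Ioo (-1 : ℝ) 1) (κ₁ κ₂ : ℝ) :
    ∑ ε₁ ∈ ({-1, 1} : Finset ℝ), ∑ ε₂ ∈ ({-1, 1} : Finset ℝ),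
        gFun (ε₁ * κ₁) (ε₂ * κ₂) (ε₁ * ε₂ * ϱ) = 0 := by
  have h : (-1 : ℝ) ≠ 1 := by norm_num
  have key1 : gFun (-κ₁) κ₂ (-ϱ) = - gFun κ₁ κ₂ ϱ := by
    unfold gFun biGauss
    have e1 : κ₂ - -ϱ * -κ₁ = κ₂ - ϱ * κ₁ := by ring
    have e2 : (-κ₁) ^ 2 - 2 * -ϱ * -κ₁ * κ₂ + κ₂ ^ 2
        = κ₁ ^ 2 - 2 * ϱ * κ₁ * κ₂ + κ₂ ^ 2 := by ring
    rw [e1, e2, neg_sq, neg_sq]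
    ring
  have key2 : gFun (-κ₁) (-κ₂) ϱ = - gFun κ₁ (-κ₂) (-ϱ) := by
    unfold gFun biGauss
    have e1 : -κ₂ - ϱ * -κ₁ = -κ₂ - -ϱ * κ₁ := by ring
    have e2 : (-κ₁) ^ 2 - 2 * ϱ * -κ₁ * -κ₂ + (-κ₂) ^ 2
        = κ₁ ^ 2 - 2 * -ϱ * κ₁ * -κ₂ + (-κ₂) ^ 2 := by ring
    rw [e1, e2, neg_sq κ₁, neg_sq ϱ]
    ring
  rw [Finset.sum_pair h, Finset.sum_pair h, Finset.sum_pair h]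
  simp only [neg_mul, one_mul, mul_one, neg_neg]
  rw [key1, key2]
  ring
end
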